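/- Let P = c_P z₁^{α₁}z₂^{α₂}z₃^{α₃}, Q = c_Q z₁^{β₁}z₂^{β₂}z₃^{β₃}, R = c_R z₁^{γ₁}z₂^{γ₂}z₃^{γ₃} be monomials with nonzero coefficients c_P, c_Q, c_R ∈ ℂ, with deg P + deg Q = 2·deg R, deg R ≥ 2, and det[[α₁,β₁,γ₁],[α₂,β₂,γ₂],[α₃,β₃,γ₃]] ≠ 0 (holomorphic nondegeneracy); set d = deg P + deg Q. Then dim_ℝ g_{−1/d} > 0 if and only if dim_ℝ g_{1−1/d} > 0. -/

import Mathlib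

open MvPolynomial Complex

noncomputable section

/-- `Φ(z) = P(z)·conj(Q(z)) + Q(z)·conj(P(z)) + R(z)·conj(R(z))`, so that the model
hypersurface is `M = {(z,w) : Im w = Φ(z)}`. -/
def Phi (P Q R : MvPolynomial (Fin 3) ℂ) (z : Fin 3 → ℂ) : ℂ :=
  eval z P * (starRingEnd ℂ) (eval z Q) + eval z Q * (starRingEnd ℂ) (eval z P) +
    eval z R * (starRingEnd ℂ) (eval z R)

/-- `Φ_j(z) = (∂P/∂z_j)(z)·conj(Q(z)) + (∂Q/∂z_j)(z)·conj(P(z)) + (∂R/∂z_j)(z)·conj(R(z))`. -/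
def PhiD (P Q R : MvPolynomial (Fin 3) ℂ) (j : Fin 3) (z : Fin 3 → ℂ) : ℂ :=
  eval z (pderiv j P) * (starRingEnd ℂ) (eval z Q) +
    eval z (pderiv j Q) * (starRingEnd ℂ) (eval z P) +
    eval z (pderiv j R) * (starRingEnd ℂ) (eval z R)

/-- The monomial `c·z₁^{e₁} z₂^{e₂} z₃^{e₃}`. -/
def mon (c : ℂ) (e : Fin 3 → ℕ) : MvPolynomial (Fin 3) ℂ :=
  C c * X 0 ^ e 0 * X 1 ^ e 1 * X 2 ^ e 2

/-- Total degree of the exponent vector `e`. -/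
def degE (e : Fin 3 → ℕ) : ℕ := e 0 + e 1 + e 2

/-- The determinant of the 3×3 matrix whose columns are the exponent vectors
`a`, `b`, `g` of the three monomials. -/
def edet (a b g : Fin 3 → ℕ) : ℤ :=
  Matrix.det !![(a 0 : ℤ), (b 0 : ℤ), (g 0 : ℤ);
                (a 1 : ℤ), (b 1 : ℤ), (g 1 : ℤ);
                (a 2 : ℤ), (b 2 : ℤ), (g 2 : ℤ)]

/-- The polynomial vector field `Σ F_j ∂/∂z_j + G ∂/∂w` is an infinitesimal CR
automorphism of `M = {Im w = Φ(z)}`. -/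
def IsInfCR (P Q R : MvPolynomial (Fin 3) ℂ)
    (F : Fin 3 → MvPolynomial (Fin 4) ℂ) (G : MvPolynomial (Fin 4) ℂ) : Prop :=
  ∀ (z : Fin 3 → ℂ) (u : ℝ),
    (eval (Fin.snoc z ((u : ℂ) + Complex.I * Phi P Q R z)) G / (2 * Complex.I) -
      ∑ j, eval (Fin.snoc z ((u : ℂ) + Complex.I * Phi P Q R z)) (F j) * PhiD P Q R j z).re = 0

/-- The graded component `g_μ`: infinitesimal CR automorphisms of `M` all of whose
monomial terms have weight `μ` (each `z_j` having weight `1/d` and `w` weight `1`). -/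
def gw (P Q R : MvPolynomial (Fin 3) ℂ) (d : ℕ) (μ : ℚ) :
    Set ((Fin 3 → MvPolynomial (Fin 4) ℂ) × MvPolynomial (Fin 4) ℂ) :=
  {Xf | IsInfCR P Q R Xf.1 Xf.2 ∧
    (∀ j, ∀ m ∈ (Xf.1 j).support,
      ((m 0 : ℚ) + (m 1 : ℚ) + (m 2 : ℚ)) / (d : ℚ) + (m 3 : ℚ) - 1 / (d : ℚ) = μ) ∧
    ∀ m ∈ Xf.2.support,
      ((m 0 : ℚ) + (m 1 : ℚ) + (m 2 : ℚ)) / (d : ℚ) + (m 3 : ℚ) - 1 = μ}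

/-!
Write `Φ = ∑ k, p k * conj (p (τ k))` with `p = (P, Q, R)` and `τ` the swap of `P` and `Q`, and let
`V` be the derivation attached to the `z`-part of a field. Polarization (`z` and `conj z` are
independent variables) turns tangency into identities
`∑ k, [z^s] V (p k) * conj [z^n] p (τ k) = -∑ k, [z^s] p (τ k) * conj [z^n] V (p k)` for `s, n ≠ 0`,
and taking for `z^n` the monomial `p (τ k)` isolates `V (p k)`.

A field of weight `-1/d` has constant `z`-part `v`. Let `deg Q ≤ deg P`. For `v j ≠ 0` the
identities and a degree count show that `z_j` divides neither `P` nor `R`, hence divides `Q` by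
nondegeneracy, and that `Q` is then a multiple of `z_j` itself. Choosing by nondegeneracy a diagonal
field `ε` which fixes `P`, `Q` and `R`, the field `w ∂/∂z_j + 2i conj(b) P (ε + w ∂/∂w)`,
where `Q = b z_j`, is tangent to `M` and has weight `1 - 1/d`.

A field of weight `1 - 1/d` is affine in `w`, and the coefficients of `w` form a field of weight
`-1/d`. If they vanish, then `V (p k)` has a larger degree than every monomial of the model, so the
identities give `V (p k) = 0` for all `k`, whence the field is zero by nondegeneracy.
-/

open scoped ComplexConjugate

section Polarization

variable {σ ι : Type*}

theorem eval_bind₁ {τ R : Type*} [CommSemiring R] (L : σ → MvPolynomial τ R) (x : τ → R)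
    (H : MvPolynomial σ R) : eval x (bind₁ L H) = eval (fun i => eval x (L i)) H := by
  simpa using eval₂Hom_bind₁ (RingHom.id R) x L H

theorem eq_zero_of_eval_sumElim_conj_eq_zero {H : MvPolynomial (σ ⊕ σ) ℂ}
    (h : ∀ z : σ → ℂ, eval (Sum.elim z fun i => conj (z i)) H = 0) : H = 0 := by
  -- In the coordinates `z = x + iy`, `ζ = x - iy` the hypothesis concerns the real points.
  let L : σ ⊕ σ → MvPolynomial (σ ⊕ σ) ℂ :=
    Sum.elim (fun i => X (.inl i) + C I * X (.inr i)) (fun i => X (.inl i) - C I * X (.inr i))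
  have hL : bind₁ L H = 0 := by
    refine funext_set (fun _ => Set.range ((↑) : ℝ → ℂ))
      (fun _ => Set.infinite_range_of_injective ofReal_injective) fun x hx => ?_
    choose y hy using fun i => hx i (Set.mem_univ i)
    rw [eval_bind₁, map_zero, ← h fun i => y (.inl i) + I * y (.inr i)]
    congr 2
    ext (i | i) <;> simp [L, ← hy, sub_eq_add_neg]
  refine MvPolynomial.funext fun x => ?_
  have hx := eval_bind₁ L (Sum.elim (fun i => (x (.inl i) + x (.inr i)) / 2)
    fun i => (x (.inl i) - x (.inr i)) / (2 * I)) H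
  rw [hL, map_zero] at hx
  rw [map_zero, hx]
  congr 2
  ext (i | i) <;> simp [L] <;> field_simp <;> ring

theorem eval_conj_map_conj (z : σ → ℂ) (p : MvPolynomial σ ℂ) :
    eval (fun i => conj (z i)) (map conj p) = conj (eval z p) := by
  rw [eval_map, eval₂_comp]
  rfl

theorem coeff_coeff_sumAlgEquiv_mul {R : Type*} [CommSemiring R] (p q : MvPolynomial σ R)
    (s n : σ →₀ ℕ) :
    coeff n (coeff s (sumAlgEquiv R σ σ (rename Sum.inl p * rename Sum.inr q))) =
      coeff s p * coeff n q := by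
  have hp : sumAlgEquiv R σ σ (rename Sum.inl p) = map C p :=
    DFunLike.congr_fun (sumAlgEquiv_comp_rename_inl R σ σ) p
  have hq : sumAlgEquiv R σ σ (rename Sum.inr q) = C q :=
    DFunLike.congr_fun (sumAlgEquiv_comp_rename_inr R σ σ) q
  rw [map_mul, hp, hq, mul_comm, coeff_C_mul, coeff_map, mul_comm, coeff_C_mul]

theorem sum_coeff_mul_conj_coeff_eq_zero [Fintype ι] {A B : ι → MvPolynomial σ ℂ}
    (h : ∀ z, ∑ i, eval z (A i) * conj (eval z (B i)) = 0) (s n : σ →₀ ℕ) :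
    ∑ i, coeff s (A i) * conj (coeff n (B i)) = 0 := by
  have hH : ∑ i, rename Sum.inl (A i) * rename Sum.inr (map conj (B i)) =
      (0 : MvPolynomial (σ ⊕ σ) ℂ) := by
    refine eq_zero_of_eval_sumElim_conj_eq_zero fun z => ?_
    simp only [map_sum, map_mul, eval_rename, Sum.elim_comp_inl, Sum.elim_comp_inr,
      eval_conj_map_conj, h z]
  simpa only [map_sum, coeff_sum, coeff_coeff_sumAlgEquiv_mul, coeff_map, map_zero,
    coeff_zero] using congrArg (fun H => coeff n (coeff s (sumAlgEquiv ℂ σ σ H))) hH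

end Polarization

section Derivation

variable {σ R : Type*} [CommSemiring R]

theorem mkDerivation_apply_eq_sum [Fintype σ] (f : σ → MvPolynomial σ R) (p : MvPolynomial σ R) :
    mkDerivation R f p = ∑ j, f j * pderiv j p := by
  classical
  induction p using MvPolynomial.induction_on with
  | C c => simp
  | add p q hp hq => simp only [map_add, mul_add, Finset.sum_add_distrib, hp, hq]
  | mul_X p i hp =>
    simp only [Derivation.leibniz, hp, mkDerivation_X, pderiv_X, Pi.single_apply, smul_eq_mul,
      mul_add, Finset.sum_add_distrib, Finset.mul_sum, mul_ite, mul_one, mul_zero,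
      Finset.sum_ite_eq, Finset.mem_univ, if_true]
    exact congrArg₂ _ (mul_comm _ _) (Finset.sum_congr rfl fun j _ => by ring)

theorem mkDerivation_zero : mkDerivation R (0 : σ → MvPolynomial σ R) = 0 :=
  (mkDerivationEquiv R).map_zero

theorem mkDerivation_mul_left (a : MvPolynomial σ R) (f : σ → MvPolynomial σ R) :
    mkDerivation R (fun j => a * f j) = a • mkDerivation R f :=
  derivation_ext fun i => by simp

theorem mkDerivation_monomial_eq_sum (f : σ → MvPolynomial σ R) (e : σ →₀ ℕ) (c : R) :
    mkDerivation R f (monomial e c) =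
      ∑ i ∈ e.support, f i * monomial (e - Finsupp.single i 1) (c * e i) := by
  rw [mkDerivation_monomial, Finsupp.sum, Finset.smul_sum]
  refine Finset.sum_congr rfl fun i _ => ?_
  rw [smul_eq_mul, mul_comm (f i), ← smul_mul_assoc, smul_monomial, smul_eq_mul]

theorem isHomogeneous_mkDerivation_monomial {f : σ → MvPolynomial σ R} {n : ℕ}
    (hf : ∀ j, (f j).IsHomogeneous n) (e : σ →₀ ℕ) (c : R) :
    (mkDerivation R f (monomial e c)).IsHomogeneous (n + (e.degree - 1)) := by
  classical
  rw [mkDerivation_monomial_eq_sum]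
  refine IsHomogeneous.sum _ _ _ fun i hi => (hf i).mul (isHomogeneous_monomial _ ?_)
  conv_rhs => rw [← Finsupp.sub_add_single_one_cancel (Finsupp.mem_support_iff.1 hi)]
  simp

theorem exists_eq_add_single_of_coeff_mkDerivation_C_ne_zero {v : σ → R} {e s : σ →₀ ℕ} {c : R}
    (h : coeff s (mkDerivation R (fun j => C (v j)) (monomial e c)) ≠ 0) :
    ∃ i, v i ≠ 0 ∧ e = s + Finsupp.single i 1 := by
  classical
  rw [mkDerivation_monomial_eq_sum, coeff_sum] at h
  obtain ⟨i, hi, h⟩ := Finset.exists_ne_zero_of_sum_ne_zero h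
  rw [coeff_C_mul, coeff_monomial] at h
  refine ⟨i, left_ne_zero_of_mul h, ?_⟩
  obtain rfl := (ite_ne_right_iff.1 (right_ne_zero_of_mul h)).1
  exact (Finsupp.sub_add_single_one_cancel (Finsupp.mem_support_iff.1 hi)).symm

theorem coeff_mkDerivation_C_monomial_add_single (v : σ → R) (s : σ →₀ ℕ) (j : σ) (c : R) :
    coeff s (mkDerivation R (fun i => C (v i)) (monomial (s + Finsupp.single j 1) c)) =
      v j * (c * (s j + 1)) := by
  classical
  rw [mkDerivation_monomial_eq_sum, coeff_sum, Finset.sum_eq_single j]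
  · simp
  · intro i hi hij
    rw [coeff_C_mul, coeff_monomial, if_neg, mul_zero]
    intro hs
    have h := Finsupp.sub_add_single_one_cancel (Finsupp.mem_support_iff.1 hi)
    rw [hs, add_right_inj, Finsupp.single_left_inj one_ne_zero] at h
    exact hij h
  · simp

theorem prod_X_mul_mkDerivation_monomial [Fintype σ] [DecidableEq σ] (f : σ → MvPolynomial σ R)
    (e : σ →₀ ℕ) (c : R) : (∏ i, X i) * mkDerivation R f (monomial e c) =
      (∑ j, (e j : MvPolynomial σ R) * (f j * ∏ i ∈ Finset.univ.erase j, X i)) * monomial e c := by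
  rw [mkDerivation_apply_eq_sum, Finset.mul_sum, Finset.sum_mul]
  refine Finset.sum_congr rfl fun j _ => ?_
  have hX : X j * pderiv j (monomial e c) = (e j : MvPolynomial σ R) * monomial e c := by
    rw [X_mul_pderiv_monomial, nsmul_eq_mul]
  rw [← Finset.mul_prod_erase _ _ (Finset.mem_univ j)]
  calc (X j * ∏ i ∈ Finset.univ.erase j, X i) * (f j * pderiv j (monomial e c))
      = (f j * ∏ i ∈ Finset.univ.erase j, X i) * (X j * pderiv j (monomial e c)) := by ring
    _ = (e j : MvPolynomial σ R) * (f j * ∏ i ∈ Finset.univ.erase j, X i) * monomial e c := by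
      rw [hX]; ring

end Derivation

/-- The matrix whose rows are the exponent vectors `e k`; its determinant is nonzero exactly when
the monomial model is holomorphically nondegenerate. -/
def exponentMatrix {ι σ : Type*} (e : ι → σ →₀ ℕ) : Matrix ι σ ℤ :=
  Matrix.of fun k j => (e k j : ℤ)

section ExponentMatrix

variable {σ R : Type*} [Fintype σ] [DecidableEq σ] [CommRing R] [CharZero R] {e : σ → σ →₀ ℕ}

theorem det_map_exponentMatrix_ne_zero (he : (exponentMatrix e).det ≠ 0) :
    ((exponentMatrix e).map ((↑) : ℤ → R)).det ≠ 0 := by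
  have h : ((exponentMatrix e).det : R) = ((exponentMatrix e).map ((↑) : ℤ → R)).det :=
    (Int.castRingHom R).map_det (exponentMatrix e)
  rwa [← h, Int.cast_ne_zero]

theorem injective_of_det_exponentMatrix_ne_zero (he : (exponentMatrix e).det ≠ 0) :
    Function.Injective e := by
  intro k l hkl
  by_contra hne
  exact he (Matrix.det_zero_of_row_eq hne (funext fun j => by simp [exponentMatrix, hkl]))

theorem ne_zero_of_det_exponentMatrix_ne_zero (he : (exponentMatrix e).det ≠ 0) (k : σ) :
    e k ≠ 0 := fun hk =>
  he (Matrix.det_eq_zero_of_row_eq_zero k fun j => by simp [exponentMatrix, hk])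

theorem eq_zero_of_mkDerivation_monomial_eq_zero [IsDomain R] (he : (exponentMatrix e).det ≠ 0)
    {c : σ → R} (hc : ∀ k, c k ≠ 0) {f : σ → MvPolynomial σ R}
    (hf : ∀ k, mkDerivation R f (monomial (e k) (c k)) = 0) : f = 0 := by
  have hmul : ((exponentMatrix e).map ((↑) : ℤ → MvPolynomial σ R)).mulVec
      (fun j => f j * ∏ i ∈ Finset.univ.erase j, X i) = 0 := by
    funext k
    have hk := prod_X_mul_mkDerivation_monomial f (e k) (c k)
    rw [hf k, mul_zero, eq_comm, mul_eq_zero] at hk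
    simpa [exponentMatrix, Matrix.mulVec, dotProduct, monomial_eq_zero, hc k] using hk
  have h0 := Matrix.eq_zero_of_mulVec_eq_zero (det_map_exponentMatrix_ne_zero he) hmul
  funext j
  exact (mul_eq_zero.1 (congrFun h0 j)).resolve_right
    (Finset.prod_ne_zero_iff.2 fun i _ => X_ne_zero i)

theorem exists_mkDerivation_monomial_eq_self {K : Type*} [Field K] [CharZero K]
    (he : (exponentMatrix e).det ≠ 0) :
    ∃ ε : σ → K, ∀ k c, mkDerivation K (fun j => C (ε j) * X j) (monomial (e k) c) =
      monomial (e k) c := by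
  obtain ⟨ε, hε⟩ := Matrix.mulVec_surjective_iff_isUnit.2 ((Matrix.isUnit_iff_isUnit_det _).2
    (det_map_exponentMatrix_ne_zero (R := K) he).isUnit) 1
  refine ⟨ε, fun k c => ?_⟩
  have hk : ∑ j, ε j * (e k j : K) = 1 := by
    simpa [exponentMatrix, Matrix.mulVec, dotProduct, mul_comm] using congrFun hε k
  calc mkDerivation K (fun j => C (ε j) * X j) (monomial (e k) c)
      = ∑ j, C (ε j * e k j) * monomial (e k) c := by
        rw [mkDerivation_apply_eq_sum]
        refine Finset.sum_congr rfl fun j _ => ?_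
        rw [mul_assoc, X_mul_pderiv_monomial, nsmul_eq_mul, C_mul, map_natCast, mul_assoc]
    _ = monomial (e k) c := by rw [← Finset.sum_mul, ← map_sum, hk, C_1, one_mul]

end ExponentMatrix

section Tangency

variable {ι σ : Type*} [Fintype ι]

/-- The function `g / 2i - ∑ j, f j * ∂Φ/∂z_j`, where `Φ = ∑ k, p k * conj (p (τ k))`. Its real
part is what the field `∑ j, f j ∂/∂z_j + g ∂/∂w`, with coefficients not involving `w`, makes of
the defining equation `Im w = Φ`. -/
def tangencyDefect (τ : Equiv.Perm ι) (p : ι → MvPolynomial σ ℂ) (f : σ → MvPolynomial σ ℂ)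
    (g : MvPolynomial σ ℂ) (z : σ → ℂ) : ℂ :=
  eval z g / (2 * I) - ∑ k, eval z (mkDerivation ℂ f (p k)) * conj (eval z (p (τ k)))

theorem tangencyDefect_zero (τ : Equiv.Perm ι) (p : ι → MvPolynomial σ ℂ) (z : σ → ℂ) :
    tangencyDefect τ p 0 0 z = 0 := by
  simp [tangencyDefect, mkDerivation_zero]

/-- Tangency of the field `∑ j, f j ∂/∂z_j + g ∂/∂w`, whose coefficients do not involve `w`, to
the model `Im w = ∑ k, p k * conj (p (τ k))`. -/
def IsTangent (τ : Equiv.Perm ι) (p : ι → MvPolynomial σ ℂ) (f : σ → MvPolynomial σ ℂ)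
    (g : MvPolynomial σ ℂ) : Prop :=
  ∀ z, (tangencyDefect τ p f g z).re = 0

namespace IsTangent

variable {τ : Equiv.Perm ι} {p : ι → MvPolynomial σ ℂ} {f : σ → MvPolynomial σ ℂ}
  {g : MvPolynomial σ ℂ}

theorem coeff_eq_sum (h : IsTangent τ p f g) (s n : σ →₀ ℕ) :
    coeff s g / (2 * I) * conj (coeff n 1) + coeff s 1 * conj (coeff n g / (2 * I)) =
      ∑ k, (coeff s (mkDerivation ℂ f (p k)) * conj (coeff n (p (τ k))) +
        coeff s (p (τ k)) * conj (coeff n (mkDerivation ℂ f (p k)))) := by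
  let G := C (2 * I)⁻¹ * g
  let V := fun k => mkDerivation ℂ f (p k)
  let A : Bool ⊕ (ι ⊕ ι) → MvPolynomial σ ℂ :=
    Sum.elim (fun x => cond x G 1) (Sum.elim (fun k => -V k) fun k => -p (τ k))
  let B : Bool ⊕ (ι ⊕ ι) → MvPolynomial σ ℂ :=
    Sum.elim (fun x => cond x 1 G) (Sum.elim (fun k => p (τ k)) V)
  have hG (z : σ → ℂ) : eval z G = eval z g / (2 * I) := by
    rw [map_mul, eval_C, div_eq_inv_mul]
  have hG' (s : σ →₀ ℕ) : coeff s G = coeff s g / (2 * I) := by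
    rw [coeff_C_mul, div_eq_inv_mul]
  have hAB (z : σ → ℂ) : ∑ i, eval z (A i) * conj (eval z (B i)) = 0 := by
    have hz := add_conj (tangencyDefect τ p f g z)
    rw [h z, mul_zero, ofReal_zero, tangencyDefect, ← hG] at hz
    simp only [A, B, Fintype.sum_sum_type, Fintype.sum_bool, Sum.elim_inl, Sum.elim_inr, cond_true,
      cond_false, map_one, map_neg, neg_mul, Finset.sum_neg_distrib]
    simp only [map_sub, map_sum, map_mul, conj_conj] at hz
    simp only [mul_comm (eval z (p (τ _)))]
    linear_combination hz
  have hcoeff := sum_coeff_mul_conj_coeff_eq_zero hAB s n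
  simp only [A, B, Fintype.sum_sum_type, Fintype.sum_bool, Sum.elim_inl, Sum.elim_inr, cond_true,
    cond_false, coeff_neg, neg_mul, Finset.sum_neg_distrib, hG'] at hcoeff
  rw [Finset.sum_add_distrib]
  linear_combination hcoeff

theorem sum_coeff_mul_conj_coeff (h : IsTangent τ p f g) {s n : σ →₀ ℕ} (hs : s ≠ 0)
    (hn : n ≠ 0) :
    ∑ k, coeff s (mkDerivation ℂ f (p k)) * conj (coeff n (p (τ k))) =
      -∑ k, coeff s (p (τ k)) * conj (coeff n (mkDerivation ℂ f (p k))) := by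
  classical
  rw [eq_neg_iff_add_eq_zero, ← Finset.sum_add_distrib, ← h.coeff_eq_sum, coeff_one, coeff_one,
    if_neg hs.symm, if_neg hn.symm, map_zero, mul_zero, zero_mul, add_zero]

theorem eq_zero_of_isHomogeneous (h : IsTangent τ p 0 g) {n : ℕ} (hg : g.IsHomogeneous n)
    (hn : n ≠ 0) : g = 0 := by
  have hg0 : coeff 0 g = 0 := hg.coeff_eq_zero (by simpa using hn.symm)
  ext s
  have hs := h.coeff_eq_sum s 0
  simpa [mkDerivation_zero, hg0] using hs

variable {e : ι → σ →₀ ℕ} {c : ι → ℂ}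

theorem coeff_mul_conj_eq (he : Function.Injective e) {k : ι} {s : σ →₀ ℕ} (hs : s ≠ 0)
    (hk : e (τ k) ≠ 0) (h : IsTangent τ (fun k => monomial (e k) (c k)) f g) :
    coeff s (mkDerivation ℂ f (monomial (e k) (c k))) * conj (c (τ k)) =
      -∑ l, coeff s (monomial (e (τ l)) (c (τ l))) *
        conj (coeff (e (τ k)) (mkDerivation ℂ f (monomial (e l) (c l)))) := by
  classical
  rw [← h.sum_coeff_mul_conj_coeff hs hk, Finset.sum_eq_single k]
  · rw [coeff_monomial, if_pos rfl]
  · intro l _ hl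
    rw [coeff_monomial, if_neg (he.ne (τ.injective.ne hl)), map_zero, mul_zero]
  · simp

theorem exists_eq_add_single (he : Function.Injective e) (hc : ∀ k, c k ≠ 0) {v : σ → ℂ}
    (h : IsTangent τ (fun k => monomial (e k) (c k)) (fun j => C (v j)) g) {k : ι} {j : σ}
    (hv : v j ≠ 0) (hj : e k j ≠ 0) (hk : e k ≠ Finsupp.single j 1) (hτk : e (τ k) ≠ 0) :
    ∃ l i, v i ≠ 0 ∧ e k = e (τ l) + Finsupp.single j 1 ∧ e l = e (τ k) + Finsupp.single i 1 := by
  classical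
  obtain ⟨s, hs⟩ : ∃ s, e k = s + Finsupp.single j 1 :=
    ⟨_, (Finsupp.sub_add_single_one_cancel hj).symm⟩
  have hs0 : s ≠ 0 := by
    rintro rfl
    exact hk (by rw [hs, zero_add])
  have hne : coeff s (mkDerivation ℂ (fun j => C (v j)) (monomial (e k) (c k))) *
      conj (c (τ k)) ≠ 0 := by
    rw [hs, coeff_mkDerivation_C_monomial_add_single]
    exact mul_ne_zero (mul_ne_zero hv (mul_ne_zero (hc k) (s j).cast_add_one_ne_zero))
      ((map_ne_zero _).2 (hc _))
  rw [h.coeff_mul_conj_eq he hs0 hτk] at hne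
  obtain ⟨l, -, hl⟩ := Finset.exists_ne_zero_of_sum_ne_zero (neg_ne_zero.1 hne)
  have hls := left_ne_zero_of_mul hl
  rw [coeff_monomial, ite_ne_right_iff] at hls
  obtain ⟨i, hvi, hi⟩ := exists_eq_add_single_of_coeff_mkDerivation_C_ne_zero
    ((map_ne_zero _).1 (right_ne_zero_of_mul hl))
  exact ⟨l, i, hvi, hls.1.symm ▸ hs, hi⟩

theorem eq_zero_of_degree_lt [Fintype σ] [DecidableEq σ] {τ : Equiv.Perm σ} {e : σ → σ →₀ ℕ}
    {c : σ → ℂ} (he : (exponentMatrix e).det ≠ 0) (hc : ∀ k, c k ≠ 0)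
    (h : IsTangent τ (fun k => monomial (e k) (c k)) f g) {n : ℕ}
    (hf : ∀ j, (f j).IsHomogeneous n) (hn : ∀ k, (e k).degree < n) : f = 0 := by
  refine eq_zero_of_mkDerivation_monomial_eq_zero he hc fun k => ?_
  have hV (l : σ) := isHomogeneous_mkDerivation_monomial hf (e l) (c l)
  ext s
  rw [coeff_zero]
  rcases eq_or_ne s 0 with rfl | hs
  · exact (hV k).coeff_eq_zero (by have := hn k; simp; omega)
  · have hk := h.coeff_mul_conj_eq (injective_of_det_exponentMatrix_ne_zero he) hs
      (ne_zero_of_det_exponentMatrix_ne_zero he (τ k))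
    rw [Finset.sum_eq_zero, neg_zero, mul_eq_zero] at hk
    · exact hk.resolve_right ((map_ne_zero _).2 (hc _))
    · intro l _
      rw [(hV l).coeff_eq_zero (by have := hn (τ k); omega), map_zero, mul_zero]

end IsTangent

end Tangency

section ThreeMonomials

variable {e : Fin 3 → Fin 3 →₀ ℕ}

theorem add_ne_two_nsmul_of_det_exponentMatrix_ne_zero (he : (exponentMatrix e).det ≠ 0) :
    e 0 + e 1 ≠ 2 • e 2 := by
  intro h
  have hj (j : Fin 3) : (e 0 j : ℤ) + e 1 j = 2 * e 2 j := by
    exact_mod_cast DFunLike.congr_fun h j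
  refine he (Matrix.exists_vecMul_eq_zero_iff.1 ⟨![1, 1, -2], by simp, ?_⟩)
  ext j
  simp [Matrix.vecMul, dotProduct, Fin.sum_univ_three, exponentMatrix, hj]

theorem exists_eq_single_of_degree_eq_one (he : (exponentMatrix e).det ≠ 0)
    (hdeg : ∀ k, (e k).degree = 1) :
    ∃ j, e 1 = Finsupp.single j 1 ∧ e 0 j = 0 ∧ e 2 j = 0 := by
  obtain ⟨j, hj⟩ := (Finsupp.sum_eq_one_iff _).1 (hdeg 1)
  have apply_eq_zero {k : Fin 3} (hk : k ≠ 1) : e k j = 0 := by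
    obtain ⟨i, hi⟩ := (Finsupp.sum_eq_one_iff _).1 (hdeg k)
    rw [hi, Finsupp.single_eq_of_ne]
    rintro rfl
    exact hk (injective_of_det_exponentMatrix_ne_zero he (hi.trans hj.symm))
  exact ⟨j, hj, apply_eq_zero (by decide), apply_eq_zero (by decide)⟩

namespace IsTangent

variable {c v : Fin 3 → ℂ} {g : MvPolynomial (Fin 3) ℂ}
  (h : IsTangent (Equiv.swap 0 1) (fun k => monomial (e k) (c k)) (fun j => C (v j)) g)
  (he : (exponentMatrix e).det ≠ 0) (hc : ∀ k, c k ≠ 0)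
  (hdeg : (e 0).degree + (e 1).degree = 2 * (e 2).degree)

include h he hc hdeg

theorem zero_eq_two_add_single (h0 : (e 0).degree ≠ 1) {j : Fin 3} (hv : v j ≠ 0)
    (hj : e 0 j ≠ 0) :
    e 0 = e 2 + Finsupp.single j 1 ∧ ∃ i, v i ≠ 0 ∧ e 2 = e 1 + Finsupp.single i 1 := by
  obtain ⟨l, i, hi, h0l, hli⟩ := h.exists_eq_add_single
    (injective_of_det_exponentMatrix_ne_zero he) hc hv hj
    (fun h0j => h0 (by rw [h0j, Finsupp.degree_single]))
    (ne_zero_of_det_exponentMatrix_ne_zero he _)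
  have hl : (e l).degree = (e 1).degree + 1 := by simp [hli]
  obtain rfl : l = 2 := by
    fin_cases l
    · lia
    · exact absurd hl (Nat.ne_add_one _)
    · rfl
  exact ⟨h0l, i, hi, hli⟩

theorem apply_zero_eq_zero (h0 : (e 0).degree ≠ 1) {j : Fin 3} (hv : v j ≠ 0) : e 0 j = 0 := by
  by_contra hj
  obtain ⟨h02, i, hi, h21⟩ := h.zero_eq_two_add_single he hc hdeg h0 hv hj
  have h0i : e 0 i ≠ 0 := by simp [h02, h21]
  have h02' := (h.zero_eq_two_add_single he hc hdeg h0 hi h0i).1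
  refine add_ne_two_nsmul_of_det_exponentMatrix_ne_zero he ?_
  rw [h02', add_right_comm, add_assoc, ← h21, two_nsmul]

variable (hle : (e 1).degree ≤ (e 0).degree)

include hle

theorem apply_two_eq_zero (h0 : (e 0).degree ≠ 1) {j : Fin 3} (hv : v j ≠ 0) : e 2 j = 0 := by
  by_contra hj
  have h1 := (Finsupp.degree_eq_zero_iff _).not.2 (ne_zero_of_det_exponentMatrix_ne_zero he 1)
  have h2j : e 2 ≠ Finsupp.single j 1 := by
    intro h2
    rw [h2, Finsupp.degree_single] at hdeg
    omega
  obtain ⟨l, i, hi, -, hli⟩ := h.exists_eq_add_single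
    (injective_of_det_exponentMatrix_ne_zero he) hc hv hj h2j
    (ne_zero_of_det_exponentMatrix_ne_zero he _)
  have hl : (e l).degree = (e 2).degree + 1 := by
    simp [hli, Equiv.swap_apply_of_ne_of_ne]
  obtain rfl : l = 0 := by
    fin_cases l
    · rfl
    · lia
    · exact absurd hl (Nat.ne_add_one _)
  have h0i := h.apply_zero_eq_zero he hc hdeg h0 hi
  simp [hli] at h0i

theorem one_eq_single (h0 : (e 0).degree ≠ 1) {j : Fin 3} (hv : v j ≠ 0) :
    e 1 = Finsupp.single j 1 := by
  by_contra h1j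
  have hj : e 1 j ≠ 0 := by
    intro h1
    refine he (Matrix.det_eq_zero_of_column_eq_zero j fun k => ?_)
    fin_cases k
    · simp [exponentMatrix, h.apply_zero_eq_zero he hc hdeg h0 hv]
    · simp [exponentMatrix, h1]
    · simp [exponentMatrix, h.apply_two_eq_zero he hc hdeg hle h0 hv]
  obtain ⟨l, i, -, -, hli⟩ := h.exists_eq_add_single
    (injective_of_det_exponentMatrix_ne_zero he) hc hv hj h1j
    (ne_zero_of_det_exponentMatrix_ne_zero he _)
  have hl : (e l).degree = (e 0).degree + 1 := by simp [hli]
  fin_cases l <;> lia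

theorem exists_eq_single (hv : v ≠ 0) :
    ∃ j, e 1 = Finsupp.single j 1 ∧ e 0 j = 0 ∧ e 2 j = 0 := by
  by_cases h0 : (e 0).degree = 1
  · refine exists_eq_single_of_degree_eq_one he fun k => ?_
    fin_cases k <;> lia
  · obtain ⟨j, hj⟩ := Function.ne_iff.1 hv
    exact ⟨j, h.one_eq_single he hc hdeg hle h0 hj, h.apply_zero_eq_zero he hc hdeg h0 hj,
      h.apply_two_eq_zero he hc hdeg hle h0 hj⟩

end IsTangent

end ThreeMonomials

section AffineInLastVariable

variable {n : ℕ} {R : Type*} [CommSemiring R]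

/-- The weights `1` for each of `z₀, …, z_{n-1}` and `d` for the last variable `w`. -/
def lastWeight (n d : ℕ) : Fin (n + 1) → ℕ :=
  Fin.snoc (fun _ => 1) d

/-- Polynomials in `z₀, …, z_{n-1}, w` as polynomials in the last variable `w`. -/
def expandLast : MvPolynomial (Fin (n + 1)) R ≃ₐ[R] Polynomial (MvPolynomial (Fin n) R) :=
  (renameEquiv R finSuccEquivLast).trans (optionEquivLeft R (Fin n))

theorem isHomogeneous_iff_degree_eq {σ : Type*} {p : MvPolynomial σ R} {N : ℕ} :
    p.IsHomogeneous N ↔ ∀ s, coeff s p ≠ 0 → s.degree = N := by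
  rw [Finsupp.degree_eq_weight_one]
  rfl

theorem eval_snoc (z : Fin n → R) (w : R) (H : MvPolynomial (Fin (n + 1)) R) :
    eval (Fin.snoc z w : Fin (n + 1) → R) H = ((expandLast H).map (eval z)).eval w := by
  rw [expandLast, AlgEquiv.trans_apply, ← optionEquivLeft_elim_eval, renameEquiv_apply, eval_rename]
  congr 2
  funext i
  refine Fin.lastCases ?_ (fun i => ?_) i <;> simp

theorem coeff_coeff_expandLast (H : MvPolynomial (Fin (n + 1)) R) (m : Fin (n + 1) →₀ ℕ) :
    coeff (Finsupp.equivFunOnFinite.symm fun i => m i.castSucc)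
      ((expandLast H).coeff (m (Fin.last n))) = coeff m H := by
  rw [expandLast, AlgEquiv.trans_apply, optionEquivLeft_coeff_coeff, renameEquiv_apply,
    ← coeff_rename_mapDomain finSuccEquivLast finSuccEquivLast.injective]
  congr 1
  ext (_ | i)
  · simp [Finsupp.mapDomain_equiv_apply]
  · simp [Finsupp.mapDomain_equiv_apply]

theorem weight_lastWeight (d : ℕ) (m : Fin (n + 1) →₀ ℕ) :
    Finsupp.weight (lastWeight n d) m =
      (Finsupp.equivFunOnFinite.symm fun i : Fin n => m i.castSucc).degree +
        m (Fin.last n) * d := by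
  simp [lastWeight, Finsupp.weight_apply, Finsupp.sum_fintype, Fin.sum_univ_castSucc,
    Finsupp.degree_eq_sum]

theorem isWeightedHomogeneous_lastWeight_iff {d N : ℕ} {H : MvPolynomial (Fin (n + 1)) R} :
    IsWeightedHomogeneous (lastWeight n d) H N ↔
      ∀ i s, coeff s ((expandLast H).coeff i) ≠ 0 → s.degree + i * d = N := by
  constructor
  · intro h i s hs
    let m : Fin (n + 1) →₀ ℕ := Finsupp.equivFunOnFinite.symm (Fin.snoc s i)
    have hm := @h m
    rw [weight_lastWeight, ← coeff_coeff_expandLast] at hm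
    simpa [m] using hm (by simpa [m] using hs)
  · intro h m hm
    rw [weight_lastWeight]
    exact h _ _ (by rwa [coeff_coeff_expandLast])

/-- The polynomial `f₀ + w f₁` in `z₀, …, z_{n-1}, w`. -/
def affineLast (f₀ f₁ : MvPolynomial (Fin n) R) : MvPolynomial (Fin (n + 1)) R :=
  expandLast.symm (Polynomial.C f₁ * Polynomial.X + Polynomial.C f₀)

theorem eval_snoc_affineLast (z : Fin n → R) (w : R) (f₀ f₁ : MvPolynomial (Fin n) R) :
    eval (Fin.snoc z w : Fin (n + 1) → R) (affineLast f₀ f₁) = eval z f₀ + w * eval z f₁ := by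
  simp only [eval_snoc, affineLast, AlgEquiv.apply_symm_apply, Polynomial.map_add,
    Polynomial.map_mul, Polynomial.map_C, Polynomial.map_X, Polynomial.eval_add,
    Polynomial.eval_mul, Polynomial.eval_C, Polynomial.eval_X]
  exact (add_comm _ _).trans (congrArg _ (mul_comm _ _))

theorem coeff_expandLast_affineLast (f₀ f₁ : MvPolynomial (Fin n) R) (i : ℕ) :
    (expandLast (affineLast f₀ f₁)).coeff i = if i = 0 then f₀ else if i = 1 then f₁ else 0 := by
  rcases i with _ | _ | i <;>
    simp [affineLast, Polynomial.coeff_X, Polynomial.coeff_C]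

variable {f₀ f₁ : MvPolynomial (Fin n) R}

theorem affineLast_eq_zero_iff : affineLast f₀ f₁ = 0 ↔ f₀ = 0 ∧ f₁ = 0 := by
  refine ⟨fun h => ⟨?_, ?_⟩, ?_⟩
  · simpa [h] using (coeff_expandLast_affineLast f₀ f₁ 0).symm
  · simpa [h] using (coeff_expandLast_affineLast f₀ f₁ 1).symm
  · rintro ⟨rfl, rfl⟩
    simp [affineLast]

theorem exists_eq_affineLast {d N : ℕ} (hN : N < 2 * d) {H : MvPolynomial (Fin (n + 1)) R}
    (hH : IsWeightedHomogeneous (lastWeight n d) H N) : ∃ f₀ f₁, H = affineLast f₀ f₁ := by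
  have hdeg : (expandLast H).natDegree ≤ 1 := by
    refine Polynomial.natDegree_le_iff_coeff_eq_zero.2 fun i hi => ?_
    ext s
    by_contra hs
    have h := isWeightedHomogeneous_lastWeight_iff.1 hH i s hs
    nlinarith
  obtain ⟨f₁, f₀, hf⟩ := Polynomial.exists_eq_X_add_C_of_natDegree_le_one hdeg
  exact ⟨f₀, f₁, by rw [affineLast, ← hf, AlgEquiv.symm_apply_apply]⟩

theorem isWeightedHomogeneous_affineLast_iff {d N : ℕ} :
    IsWeightedHomogeneous (lastWeight n d) (affineLast f₀ f₁) N ↔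
      f₀.IsHomogeneous N ∧ ∀ s, coeff s f₁ ≠ 0 → s.degree + d = N := by
  simp only [isWeightedHomogeneous_lastWeight_iff, isHomogeneous_iff_degree_eq,
    coeff_expandLast_affineLast]
  constructor
  · intro h
    exact ⟨fun s hs => by simpa using h 0 s (by simpa using hs),
      fun s hs => by simpa using h 1 s (by simpa using hs)⟩
  · rintro ⟨h₀, h₁⟩ (_ | _ | i) s hs
    · simpa using h₀ s (by simpa using hs)
    · simpa using h₁ s (by simpa using hs)
    · simp at hs

theorem isWeightedHomogeneous_affineLast_iff_of_lt {d N : ℕ} (hN : N < d) :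
    IsWeightedHomogeneous (lastWeight n d) (affineLast f₀ f₁) N ↔
      f₀.IsHomogeneous N ∧ f₁ = 0 := by
  rw [isWeightedHomogeneous_affineLast_iff, MvPolynomial.ext_iff]
  refine and_congr_right' (forall_congr' fun s => ?_)
  rw [coeff_zero, ← not_imp_comm]
  exact forall_prop_of_true (by omega)

theorem isWeightedHomogeneous_affineLast_add_iff {d N : ℕ} :
    IsWeightedHomogeneous (lastWeight n d) (affineLast f₀ f₁) (N + d) ↔
      f₀.IsHomogeneous (N + d) ∧ f₁.IsHomogeneous N := by
  simp only [isWeightedHomogeneous_affineLast_iff, add_left_inj,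
    ← isHomogeneous_iff_degree_eq]

end AffineInLastVariable

section GradedComponents

variable {p : Fin 3 → MvPolynomial (Fin 3) ℂ} {f f₀ f₁ : Fin 3 → MvPolynomial (Fin 3) ℂ}
  {g g₀ g₁ : MvPolynomial (Fin 3) ℂ} {d : ℕ}

theorem mem_gw_iff {P Q R : MvPolynomial (Fin 3) ℂ} (hd : 0 < d) (k : ℕ)
    {Y : (Fin 3 → MvPolynomial (Fin 4) ℂ) × MvPolynomial (Fin 4) ℂ} :
    Y ∈ gw P Q R d (k - 1 / d) ↔ IsInfCR P Q R Y.1 Y.2 ∧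
      (∀ j, IsWeightedHomogeneous (lastWeight 3 d) (Y.1 j) (k * d)) ∧
      IsWeightedHomogeneous (lastWeight 3 d) Y.2 ((k + 1) * d - 1) := by
  have hd' : (d : ℚ) ≠ 0 := by exact_mod_cast hd.ne'
  have hweight (m : Fin 4 →₀ ℕ) :
      Finsupp.weight (lastWeight 3 d) m = m 0 + m 1 + m 2 + m 3 * d := by
    rw [weight_lastWeight, Finsupp.degree_eq_sum, Fin.sum_univ_three]
    rfl
  have hF (m : Fin 4 →₀ ℕ) : ((m 0 : ℚ) + m 1 + m 2) / d + m 3 - 1 / d = k - 1 / d ↔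
      Finsupp.weight (lastWeight 3 d) m = k * d := by
    rw [hweight, ← Nat.cast_inj (R := ℚ)]
    push_cast
    field_simp
    constructor <;> intro h <;> linarith
  have hG (m : Fin 4 →₀ ℕ) : ((m 0 : ℚ) + m 1 + m 2) / d + m 3 - 1 = k - 1 / d ↔
      Finsupp.weight (lastWeight 3 d) m = (k + 1) * d - 1 := by
    rw [hweight, ← Nat.cast_inj (R := ℚ), Nat.cast_sub (Nat.mul_pos k.succ_pos hd)]
    push_cast
    field_simp
    constructor <;> intro h <;> linarith
  simp only [gw, Set.mem_ofPred_eq, hF, hG, mem_support_iff, IsWeightedHomogeneous]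

theorem gw_comm (P Q R : MvPolynomial (Fin 3) ℂ) (d : ℕ) (μ : ℚ) :
    gw P Q R d μ = gw Q P R d μ := by
  have hPhi : Phi P Q R = Phi Q P R := by
    funext z
    simp only [Phi]
    ring
  have hPhiD : PhiD P Q R = PhiD Q P R := by
    funext j z
    simp only [PhiD]
    ring
  simp only [gw, IsInfCR, hPhi, hPhiD]

theorem Phi_eq_sum (p : Fin 3 → MvPolynomial (Fin 3) ℂ) (z : Fin 3 → ℂ) :
    Phi (p 0) (p 1) (p 2) z = ∑ k, eval z (p k) * conj (eval z (p (Equiv.swap 0 1 k))) := by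
  simp [Phi, Fin.sum_univ_three, Equiv.swap_apply_of_ne_of_ne]

theorem im_Phi (P Q R : MvPolynomial (Fin 3) ℂ) (z : Fin 3 → ℂ) : (Phi P Q R z).im = 0 := by
  rw [← conj_eq_iff_im]
  simp only [Phi, map_add, map_mul, conj_conj]
  ring

theorem sum_mul_PhiD (f p : Fin 3 → MvPolynomial (Fin 3) ℂ) (z : Fin 3 → ℂ) :
    ∑ j, eval z (f j) * PhiD (p 0) (p 1) (p 2) j z =
      ∑ k, eval z (mkDerivation ℂ f (p k)) * conj (eval z (p (Equiv.swap 0 1 k))) := by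
  simp only [mkDerivation_apply_eq_sum, PhiD, Fin.sum_univ_three, map_add, map_mul,
    Equiv.swap_apply_left, Equiv.swap_apply_right,
    Equiv.swap_apply_of_ne_of_ne (by decide : (2 : Fin 3) ≠ 0) (by decide : (2 : Fin 3) ≠ 1)]
  ring

/-- The field `∑ j, (f₀ j + w f₁ j) ∂/∂z_j + (g₀ + w g₁) ∂/∂w`, encoded by its coefficients. -/
def affineField (f₀ f₁ : Fin 3 → MvPolynomial (Fin 3) ℂ) (g₀ g₁ : MvPolynomial (Fin 3) ℂ) :
    (Fin 3 → MvPolynomial (Fin 4) ℂ) × MvPolynomial (Fin 4) ℂ :=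
  (fun j => affineLast (f₀ j) (f₁ j), affineLast g₀ g₁)

theorem affineField_eq_zero_iff :
    affineField f₀ f₁ g₀ g₁ = 0 ↔ (f₀ = 0 ∧ g₀ = 0) ∧ f₁ = 0 ∧ g₁ = 0 := by
  simp only [affineField, Prod.mk_eq_zero, funext_iff, Pi.zero_apply, affineLast_eq_zero_iff,
    forall_and]
  tauto

theorem exists_eq_affineField_of_mem_gw {P Q R : MvPolynomial (Fin 3) ℂ} (hd : 0 < d) {k : ℕ}
    (hk : k < 2) {Y : (Fin 3 → MvPolynomial (Fin 4) ℂ) × MvPolynomial (Fin 4) ℂ}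
    (hY : Y ∈ gw P Q R d (k - 1 / d)) : ∃ f₀ f₁ g₀ g₁, Y = affineField f₀ f₁ g₀ g₁ := by
  obtain ⟨-, hF, hG⟩ := (mem_gw_iff hd k).1 hY
  have hk' : (k + 1) * d ≤ 2 * d := Nat.mul_le_mul_right d hk
  choose f₀ f₁ hf using fun j => exists_eq_affineLast (by lia) (hF j)
  obtain ⟨g₀, g₁, hg⟩ := exists_eq_affineLast (by lia) hG
  exact ⟨f₀, f₁, g₀, g₁, Prod.ext (funext hf) hg⟩

theorem isInfCR_affineField_iff :
    IsInfCR (p 0) (p 1) (p 2) (affineField f₀ f₁ g₀ g₁).1 (affineField f₀ f₁ g₀ g₁).2 ↔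
      IsTangent (Equiv.swap 0 1) p f₁ g₁ ∧
        ∀ z, (tangencyDefect (Equiv.swap 0 1) p f₀ g₀ z).re =
          (Phi (p 0) (p 1) (p 2) z).re * (tangencyDefect (Equiv.swap 0 1) p f₁ g₁ z).im := by
  have hsplit (z : Fin 3 → ℂ) (w : ℂ) :
      eval (Fin.snoc z w) (affineField f₀ f₁ g₀ g₁).2 / (2 * I) -
          ∑ j, eval (Fin.snoc z w) ((affineField f₀ f₁ g₀ g₁).1 j) * PhiD (p 0) (p 1) (p 2) j z =
        tangencyDefect (Equiv.swap 0 1) p f₀ g₀ z +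
          w * tangencyDefect (Equiv.swap 0 1) p f₁ g₁ z := by
    simp only [affineField, eval_snoc_affineLast, tangencyDefect, ← sum_mul_PhiD, add_mul,
      Finset.sum_add_distrib, mul_assoc, ← Finset.mul_sum]
    ring
  simp only [IsInfCR, hsplit, add_re, mul_re, add_im, mul_im, I_re, I_im, ofReal_re, ofReal_im,
    im_Phi, zero_mul, one_mul, zero_add, sub_zero, mul_zero, add_zero]
  constructor
  · intro h
    refine ⟨fun z => ?_, fun z => ?_⟩
    · linear_combination h z 1 - h z 0
    · linear_combination h z 0
  · rintro ⟨h₁, h₀⟩ z u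
    linear_combination h₀ z + u * h₁ z

theorem affineField_mem_gw_neg_iff (hd : 0 < d) :
    affineField f₀ f₁ g₀ g₁ ∈ gw (p 0) (p 1) (p 2) d (-(1 / d)) ↔
      (f₁ = 0 ∧ g₁ = 0) ∧ IsTangent (Equiv.swap 0 1) p f₀ g₀ ∧
        (∀ j, (f₀ j).IsHomogeneous 0) ∧ g₀.IsHomogeneous (d - 1) := by
  rw [show (-(1 / d) : ℚ) = (0 : ℕ) - 1 / d by simp, mem_gw_iff hd, isInfCR_affineField_iff]
  simp only [affineField, zero_mul, zero_add, one_mul,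
    isWeightedHomogeneous_affineLast_iff_of_lt hd,
    isWeightedHomogeneous_affineLast_iff_of_lt (Nat.sub_one_lt_of_lt hd), forall_and]
  constructor
  · rintro ⟨⟨-, h⟩, ⟨hf₀, hf₁⟩, hg₀, rfl⟩
    obtain rfl : f₁ = 0 := funext hf₁
    simp only [tangencyDefect_zero, zero_im, mul_zero] at h
    exact ⟨⟨rfl, rfl⟩, h, hf₀, hg₀⟩
  · rintro ⟨⟨rfl, rfl⟩, h, hf₀, hg₀⟩
    simp only [IsTangent, tangencyDefect_zero, zero_re, zero_im, mul_zero]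
    exact ⟨⟨fun _ => trivial, h⟩, ⟨hf₀, fun _ => rfl⟩, hg₀, trivial⟩

theorem affineField_mem_gw_one_sub_iff (hd : 0 < d) :
    affineField f₀ f₁ g₀ g₁ ∈ gw (p 0) (p 1) (p 2) d (1 - 1 / d) ↔
      (IsTangent (Equiv.swap 0 1) p f₁ g₁ ∧
        ∀ z, (tangencyDefect (Equiv.swap 0 1) p f₀ g₀ z).re =
          (Phi (p 0) (p 1) (p 2) z).re * (tangencyDefect (Equiv.swap 0 1) p f₁ g₁ z).im) ∧
      (∀ j, (f₀ j).IsHomogeneous d ∧ (f₁ j).IsHomogeneous 0) ∧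
      g₀.IsHomogeneous (d - 1 + d) ∧ g₁.IsHomogeneous (d - 1) := by
  have hG : (1 + 1) * d - 1 = d - 1 + d := by omega
  have hF : 1 * d = 0 + d := by omega
  rw [show (1 - 1 / d : ℚ) = (1 : ℕ) - 1 / d by simp, mem_gw_iff hd, isInfCR_affineField_iff,
    hG, hF]
  simp only [affineField, isWeightedHomogeneous_affineLast_add_iff]
  simp only [zero_add]

theorem affineField_mem_gw_one_sub_of_pderiv_eq (hd : 0 < d)
    {ε : Fin 3 → MvPolynomial (Fin 3) ℂ} (hε : ∀ k, mkDerivation ℂ ε (p k) = p k)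
    (hεdeg : ∀ j, (ε j).IsHomogeneous 1) (hp : (p 0).IsHomogeneous (d - 1)) {j : Fin 3} {b : ℂ}
    (h0 : pderiv j (p 0) = 0) (h1 : pderiv j (p 1) = C b) (h2 : pderiv j (p 2) = 0) :
    affineField (fun k => C (2 * I * conj b) * p 0 * ε k) (Pi.single j 1) 0
        (C (2 * I * conj b) * p 0) ∈ gw (p 0) (p 1) (p 2) d (1 - 1 / d) := by
  have hκp : (C (2 * I * conj b) * p 0).IsHomogeneous (d - 1) := hp.C_mul _
  have defect₁ (z : Fin 3 → ℂ) : tangencyDefect (Equiv.swap 0 1) p (Pi.single j 1)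
      (C (2 * I * conj b) * p 0) z = conj b * eval z (p 0) - conj (conj b * eval z (p 0)) := by
    simp only [tangencyDefect, ← pderiv_def, Fin.sum_univ_three, h0, h1, h2,
      Equiv.swap_apply_right, map_mul, eval_C, map_zero, conj_conj]
    field_simp
    ring
  have defect₀ (z : Fin 3 → ℂ) : tangencyDefect (Equiv.swap 0 1) p
      (fun k => C (2 * I * conj b) * p 0 * ε k) 0 z =
        -(2 * I * (conj b * eval z (p 0)) * Phi (p 0) (p 1) (p 2) z) := by
    simp only [tangencyDefect, mkDerivation_mul_left, Derivation.smul_apply, hε, smul_eq_mul,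
      Phi_eq_sum, map_mul, eval_C, map_zero, Finset.mul_sum, zero_div, zero_sub, mul_assoc]
  refine (affineField_mem_gw_one_sub_iff hd).2
    ⟨⟨fun z => ?_, fun z => ?_⟩, fun k => ⟨?_, ?_⟩, isHomogeneous_zero _ _ _, hκp⟩
  · rw [defect₁, sub_re, conj_re, sub_self]
  · rw [defect₀, defect₁]
    simp only [neg_re, mul_re, mul_im, sub_im, conj_re, conj_im, I_re, I_im, im_Phi, re_ofNat,
      im_ofNat]
    ring
  · simpa only [Nat.sub_add_cancel hd] using hκp.mul (hεdeg k)
  · obtain rfl | hk := eq_or_ne k j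
    · simpa using isHomogeneous_one _ _
    · simpa [hk] using isHomogeneous_zero _ _ _

end GradedComponents

section MonomialModel

variable {e : Fin 3 → Fin 3 →₀ ℕ} {c : Fin 3 → ℂ}

theorem degree_lt_of_degree_add_eq (he : (exponentMatrix e).det ≠ 0) {d : ℕ}
    (hd : (e 0).degree + (e 1).degree = d) (hdeg : d = 2 * (e 2).degree) (k : Fin 3) :
    (e k).degree < d := by
  have hpos (k : Fin 3) : (e k).degree ≠ 0 :=
    (Finsupp.degree_eq_zero_iff _).not.2 (ne_zero_of_det_exponentMatrix_ne_zero he k)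
  have h0 := hpos 0
  have h1 := hpos 1
  fin_cases k <;> lia

theorem exists_mem_gw_one_sub_of_eq_single (he : (exponentMatrix e).det ≠ 0) {j : Fin 3}
    (h1 : e 1 = Finsupp.single j 1) (h0 : e 0 j = 0) (h2 : e 2 j = 0) {d : ℕ}
    (hd : (e 0).degree + 1 = d) :
    ∃ Y ∈ gw (monomial (e 0) (c 0)) (monomial (e 1) (c 1)) (monomial (e 2) (c 2)) d (1 - 1 / d),
      Y ≠ 0 := by
  obtain ⟨ε, hε⟩ := exists_mkDerivation_monomial_eq_self (K := ℂ) he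
  refine ⟨_, affineField_mem_gw_one_sub_of_pderiv_eq (p := fun k => monomial (e k) (c k))
    (j := j) (b := c 1) (by omega) (fun k => hε k (c k)) (fun k => (isHomogeneous_X ℂ k).C_mul _)
    (isHomogeneous_monomial _ (by omega)) ?_ ?_ ?_, fun h => ?_⟩
  · simp [h0]
  · simp [h1]
  · simp [h2]
  · simpa using congrFun (affineField_eq_zero_iff.1 h).2.1 j

theorem exists_mem_gw_one_sub_of_exists_mem_gw_neg (he : (exponentMatrix e).det ≠ 0)
    (hc : ∀ k, c k ≠ 0) {d : ℕ} (hd : (e 0).degree + (e 1).degree = d)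
    (hdeg : d = 2 * (e 2).degree) (hle : (e 1).degree ≤ (e 0).degree)
    (h : ∃ Y ∈ gw (monomial (e 0) (c 0)) (monomial (e 1) (c 1)) (monomial (e 2) (c 2)) d
      (-(1 / d)), Y ≠ 0) :
    ∃ Y ∈ gw (monomial (e 0) (c 0)) (monomial (e 1) (c 1)) (monomial (e 2) (c 2)) d (1 - 1 / d),
      Y ≠ 0 := by
  have hlt := degree_lt_of_degree_add_eq he hd hdeg
  have hd0 : 0 < d := (Nat.zero_le _).trans_lt (hlt 0)
  obtain ⟨Y, hY, hne⟩ := h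
  obtain ⟨f, f₁, g, g₁, rfl⟩ := exists_eq_affineField_of_mem_gw hd0 zero_lt_two
    (by rwa [Nat.cast_zero, zero_sub])
  obtain ⟨⟨rfl, rfl⟩, ht, hf, hg⟩ :=
    (affineField_mem_gw_neg_iff (p := fun k => monomial (e k) (c k)) hd0).1 hY
  obtain ⟨v, rfl⟩ : ∃ v : Fin 3 → ℂ, f = fun j => C (v j) :=
    ⟨fun j => coeff 0 (f j), funext fun j =>
      totalDegree_eq_zero_iff_eq_C.1 ((totalDegree_zero_iff_isHomogeneous _).2 (hf j))⟩
  have hv : v ≠ 0 := by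
    rintro rfl
    have hC : (fun j => C ((0 : Fin 3 → ℂ) j)) = (0 : Fin 3 → MvPolynomial (Fin 3) ℂ) :=
      funext fun _ => C_0
    rw [hC] at ht hne
    have hg0 : g = 0 := ht.eq_zero_of_isHomogeneous hg (by omega)
    exact hne (affineField_eq_zero_iff.2 ⟨⟨rfl, hg0⟩, rfl, rfl⟩)
  obtain ⟨j, hj1, hj0, hj2⟩ := ht.exists_eq_single he hc (hd.trans hdeg) hle hv
  exact exists_mem_gw_one_sub_of_eq_single he hj1 hj0 hj2 (by rw [← hd, hj1, Finsupp.degree_single])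

theorem exists_mem_gw_neg_of_exists_mem_gw_one_sub (he : (exponentMatrix e).det ≠ 0)
    (hc : ∀ k, c k ≠ 0) {d : ℕ} (hd : ∀ k, (e k).degree < d)
    (h : ∃ Y ∈ gw (monomial (e 0) (c 0)) (monomial (e 1) (c 1)) (monomial (e 2) (c 2)) d
      (1 - 1 / d), Y ≠ 0) :
    ∃ Y ∈ gw (monomial (e 0) (c 0)) (monomial (e 1) (c 1)) (monomial (e 2) (c 2)) d
      (-(1 / d)), Y ≠ 0 := by
  have hd0 : 0 < d := (Nat.zero_le _).trans_lt (hd 0)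
  obtain ⟨Y, hY, hne⟩ := h
  obtain ⟨f₀, f₁, g₀, g₁, rfl⟩ := exists_eq_affineField_of_mem_gw hd0 one_lt_two
    (by rwa [Nat.cast_one])
  obtain ⟨⟨h₁, h₀⟩, hf, hg₀, hg₁⟩ :=
    (affineField_mem_gw_one_sub_iff (p := fun k => monomial (e k) (c k)) hd0).1 hY
  rw [forall_and] at hf
  by_cases hw : f₁ = 0 ∧ g₁ = 0
  · obtain ⟨rfl, rfl⟩ := hw
    simp only [tangencyDefect_zero, zero_im, mul_zero] at h₀
    obtain rfl : f₀ = 0 := IsTangent.eq_zero_of_degree_lt he hc h₀ hf.1 hd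
    have hg₀ : g₀ = 0 := IsTangent.eq_zero_of_isHomogeneous h₀ hg₀ (by omega)
    exact absurd (affineField_eq_zero_iff.2 ⟨⟨rfl, hg₀⟩, rfl, rfl⟩) hne
  · exact ⟨affineField f₁ 0 g₁ 0, (affineField_mem_gw_neg_iff (p := fun k => monomial (e k) (c k))
      hd0).2 ⟨⟨rfl, rfl⟩, h₁, hf.2, hg₁⟩, fun h => hw (affineField_eq_zero_iff.1 h).1⟩

end MonomialModel

theorem mon_eq_monomial (c : ℂ) (s : Fin 3 → ℕ) :
    mon c s = monomial (Finsupp.equivFunOnFinite.symm s) c := by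
  rw [monomial_eq, Finsupp.prod_fintype _ _ fun _ => pow_zero _, Fin.prod_univ_three]
  simp [mon, mul_assoc]

theorem edet_eq_det_exponentMatrix (a b g : Fin 3 → ℕ) :
    edet a b g =
      (exponentMatrix fun k => Finsupp.equivFunOnFinite.symm (![a, b, g] k)).det := by
  rw [edet, ← Matrix.det_transpose]
  congr 1
  ext i j
  fin_cases i <;> fin_cases j <;> rfl

theorem edet_swap (a b g : Fin 3 → ℕ) : edet b a g = -edet a b g := by
  simp only [edet, Matrix.det_fin_three, Matrix.of_apply, Matrix.cons_val]
  ring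

theorem degree_equivFunOnFinite_symm (s : Fin 3 → ℕ) :
    (Finsupp.equivFunOnFinite.symm s).degree = degE s := by
  simp [Finsupp.degree_eq_sum, Fin.sum_univ_three, degE]

theorem rank_span_pos_iff {K V : Type*} [DivisionRing K] [AddCommGroup V] [Module K V] (s : Set V) :
    0 < Module.rank K (Submodule.span K s) ↔ ∃ x ∈ s, x ≠ 0 := by
  rw [rank_pos_iff_nontrivial, Submodule.nontrivial_iff_ne_bot, Ne, Submodule.span_eq_bot]
  push Not
  rfl

theorem stmt14_general (cP cQ cR : ℂ) (hcP : cP ≠ 0) (hcQ : cQ ≠ 0) (hcR : cR ≠ 0)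
    (a b g : Fin 3 → ℕ)
    (hdeg : degE a + degE b = 2 * degE g)
    (hdet : edet a b g ≠ 0) :
    0 < Module.rank ℝ ↥(Submodule.span ℝ (gw (mon cP a) (mon cQ b) (mon cR g)
        (degE a + degE b) (-(1 / ((degE a + degE b : ℕ) : ℚ))))) ↔
      0 < Module.rank ℝ ↥(Submodule.span ℝ (gw (mon cP a) (mon cQ b) (mon cR g)
        (degE a + degE b) (1 - 1 / ((degE a + degE b : ℕ) : ℚ)))) := by
  wlog hle : degE b ≤ degE a generalizing cP cQ a b
  · rw [gw_comm (mon cP a), gw_comm (mon cP a), add_comm (degE a)]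
    refine this cQ cP hcQ hcP b a ?_ ?_ (le_of_not_ge hle)
    · rwa [add_comm]
    · rwa [edet_swap, neg_ne_zero]
  let e (k : Fin 3) : Fin 3 →₀ ℕ := Finsupp.equivFunOnFinite.symm (![a, b, g] k)
  let c : Fin 3 → ℂ := ![cP, cQ, cR]
  have he : (exponentMatrix e).det ≠ 0 := by rwa [← edet_eq_det_exponentMatrix]
  have hc (k : Fin 3) : c k ≠ 0 := by fin_cases k <;> assumption
  have hd : (e 0).degree + (e 1).degree = degE a + degE b :=
    congrArg₂ _ (degree_equivFunOnFinite_symm a) (degree_equivFunOnFinite_symm b)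
  have hd2 : degE a + degE b = 2 * (e 2).degree :=
    hdeg.trans (congrArg _ (degree_equivFunOnFinite_symm g).symm)
  have hle' : (e 1).degree ≤ (e 0).degree :=
    (degree_equivFunOnFinite_symm b).trans_le (hle.trans_eq (degree_equivFunOnFinite_symm a).symm)
  rw [rank_span_pos_iff, rank_span_pos_iff, mon_eq_monomial, mon_eq_monomial, mon_eq_monomial]
  exact ⟨exists_mem_gw_one_sub_of_exists_mem_gw_neg (e := e) (c := c) he hc hd hd2 hle',
    exists_mem_gw_neg_of_exists_mem_gw_one_sub (e := e) (c := c) he hc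
      (degree_lt_of_degree_add_eq he hd hd2)⟩

/-- For a holomorphically nondegenerate monomial model with
`deg R ≥ 2` and `d = deg P + deg Q`, one has `dim_ℝ g_{-1/d} > 0 ↔ dim_ℝ g_{1-1/d} > 0`. -/
theorem stmt14 (cP cQ cR : ℂ) (hcP : cP ≠ 0) (hcQ : cQ ≠ 0) (hcR : cR ≠ 0)
    (a b g : Fin 3 → ℕ)
    (hdeg : degE a + degE b = 2 * degE g)
    (hdegR : 2 ≤ degE g)
    (hdet : edet a b g ≠ 0) :
    0 < Module.rank ℝ ↥(Submodule.span ℝ (gw (mon cP a) (mon cQ b) (mon cR g)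
        (degE a + degE b) (-(1 / ((degE a + degE b : ℕ) : ℚ))))) ↔
      0 < Module.rank ℝ ↥(Submodule.span ℝ (gw (mon cP a) (mon cQ b) (mon cR g)
        (degE a + degE b) (1 - 1 / ((degE a + degE b : ℕ) : ℚ)))) :=
  stmt14_general cP cQ cR hcP hcQ hcR a b g hdeg hdet
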